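/- Let R be a commutative ring and n ≥ 1. The map * : M_{2^n}(R) → M_{2^n}(R) defined by M* := J_n·Mᵀ·J_nᵀ is an R-linear anti-automorphism of order two (i.e. (MN)* = N*·M* and M** = M), and it satisfies φ(v,w)* = −φ(v,w) for all (v,w) ∈ R^n ⊕ R^n; hence, under the identification φ : Cl ≅ M_{2^n}(R), it is the standard involution of the Clifford algebra, i.e. the unique anti-automorphism of Cl extending the map (v,w) ↦ (−v,−w) on R^n ⊕ R^n. -/

import Mathlib

open Matrix

noncomputable section

/-- Reindexing equivalence `Fin (2 ^ n) ⊕ Fin (2 ^ n) ≃ Fin (2 ^ (n + 1))`. -/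
def pow2Equiv (n : ℕ) : Fin (2 ^ n) ⊕ Fin (2 ^ n) ≃ Fin (2 ^ (n + 1)) :=
  finSumFinEquiv.trans (finCongr (by rw [pow_succ]; ring))

/-- The Suslin matrix `S_n(v, w)` of size `2 ^ n` associated to `v, w : Fin (n+1) → R`. -/
def sus (R : Type) [CommRing R] : (n : ℕ) → (Fin (n + 1) → R) → (Fin (n + 1) → R) →
    Matrix (Fin (2 ^ n)) (Fin (2 ^ n)) R
  | 0, v, _ => v 0 • 1
  | n + 1, v, w =>
      Matrix.reindex (pow2Equiv n) (pow2Equiv n)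
        (Matrix.fromBlocks (v 0 • 1) (sus R n (v ∘ Fin.succ) (w ∘ Fin.succ))
          (-(sus R n (w ∘ Fin.succ) (v ∘ Fin.succ))ᵀ) (w 0 • 1))

/-- The conjugate Suslin matrix `S̄_n(v, w) = S_n(w, v)ᵀ`. -/
def susBar (R : Type) [CommRing R] (n : ℕ) (v w : Fin (n + 1) → R) :
    Matrix (Fin (2 ^ n)) (Fin (2 ^ n)) R :=
  (sus R n w v)ᵀ

/-- Suslin's matrices `J_n`. -/
def Jmat (R : Type) [CommRing R] : (n : ℕ) → Matrix (Fin (2 ^ n)) (Fin (2 ^ n)) R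
  | 0 => 1
  | n + 1 =>
      if Even (n + 1) then
        Matrix.reindex (pow2Equiv n) (pow2Equiv n)
          (Matrix.fromBlocks (Jmat R n) 0 0 (-(Jmat R n)))
      else
        Matrix.reindex (pow2Equiv n) (pow2Equiv n)
          (Matrix.fromBlocks 0 (Jmat R n) (-(Jmat R n)) 0)

/-- The involution `M ↦ M* = J_n · Mᵀ · J_nᵀ`. -/
def invol (R : Type) [CommRing R] (n : ℕ) (M : Matrix (Fin (2 ^ n)) (Fin (2 ^ n)) R) :
    Matrix (Fin (2 ^ n)) (Fin (2 ^ n)) R :=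
  Jmat R n * Mᵀ * (Jmat R n)ᵀ

/-- `φ(v, w) = [[0, S_n(v,w)], [S̄_n(v,w), 0]]` (note the shift: vectors in `R^{n+1}`,
matrices of size `2 ^ (n + 1)`). -/
def phiMat (R : Type) [CommRing R] (n : ℕ) (v w : Fin (n + 1) → R) :
    Matrix (Fin (2 ^ (n + 1))) (Fin (2 ^ (n + 1))) R :=
  Matrix.reindex (pow2Equiv n) (pow2Equiv n)
    (Matrix.fromBlocks 0 (sus R n v w) (susBar R n v w) 0)

/-- The set of Suslin matrices of size `2 ^ m`. -/
def SuslinSet (R : Type) [CommRing R] (m : ℕ) : Set (Matrix (Fin (2 ^ m)) (Fin (2 ^ m)) R) :=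
  {S | ∃ v w : Fin (m + 1) → R, S = sus R m v w}

/-- The image of the hyperbolic space `R^{m+1} ⊕ R^{m+1}` inside the Clifford algebra
`M_{2^{m+1}}(R)`. -/
def PhiSet (R : Type) [CommRing R] (m : ℕ) :
    Set (Matrix (Fin (2 ^ (m + 1))) (Fin (2 ^ (m + 1))) R) :=
  {x | ∃ v w : Fin (m + 1) → R, x = phiMat R m v w}

/-- The block diagonal matrix `diag(g₁, g₂)`. -/
def diagBlock (R : Type) [CommRing R] (m : ℕ)
    (g₁ g₂ : Matrix (Fin (2 ^ m)) (Fin (2 ^ m)) R) :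
    Matrix (Fin (2 ^ (m + 1))) (Fin (2 ^ (m + 1))) R :=
  Matrix.reindex (pow2Equiv m) (pow2Equiv m) (Matrix.fromBlocks g₁ 0 0 g₂)

/-- `Spin_{2(m+1)}(R)`, as the set of pairs `(g₁, g₂)` such that `x = diag(g₁, g₂)`
satisfies `x · x* = 1` and conjugation by `x` maps the image of the hyperbolic space
onto itself. -/
def SpinPair (R : Type) [CommRing R] (m : ℕ) :
    Set (Matrix (Fin (2 ^ m)) (Fin (2 ^ m)) R × Matrix (Fin (2 ^ m)) (Fin (2 ^ m)) R) :=
  {p | IsUnit p.1 ∧ IsUnit p.2 ∧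
    diagBlock R m p.1 p.2 * invol R (m + 1) (diagBlock R m p.1 p.2) = 1 ∧
    (fun y => diagBlock R m p.1 p.2 * y * (diagBlock R m p.1 p.2)⁻¹) '' PhiSet R m
      = PhiSet R m}

/-- The group `G_m(R)` of `g ∈ GL_{2^m}(R)` such that `g · S · g*` is a Suslin matrix
for every Suslin matrix `S`. -/
def GSet (R : Type) [CommRing R] (m : ℕ) : Set (Matrix (Fin (2 ^ m)) (Fin (2 ^ m)) R) :=
  {g | IsUnit g ∧ ∀ S ∈ SuslinSet R m, g * S * invol R m g ∈ SuslinSet R m}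

/-- The group `SG_m(R)` of `g ∈ G_m(R)` preserving the length `l(S(v,w)) = v ⬝ᵥ w`. -/
def SGSet (R : Type) [CommRing R] (m : ℕ) : Set (Matrix (Fin (2 ^ m)) (Fin (2 ^ m)) R) :=
  {g | g ∈ GSet R m ∧ ∀ v w v' w' : Fin (m + 1) → R,
    g * sus R m v w * invol R m g = sus R m v' w' → v' ⬝ᵥ w' = v ⬝ᵥ w}

/-- The hyperbolic quadratic form `q(v, w) = v ⬝ᵥ w` on `R^n ⊕ R^n`. -/
def hypForm (R : Type) [CommRing R] (n : ℕ) :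
    QuadraticForm R ((Fin n → R) × (Fin n → R)) :=
  LinearMap.BilinMap.toQuadraticMap
    (LinearMap.mk₂ R (fun x y => x.1 ⬝ᵥ y.2)
      (fun x x' y => by simp [add_dotProduct])
      (fun c x y => by simp [smul_dotProduct])
      (fun x y y' => by simp [dotProduct_add])
      (fun x c y => by simp [dotProduct_smul]))

/-- `E_i = S_m(e_i, 0)`. -/
def Emat (R : Type) [CommRing R] (m : ℕ) (i : Fin (m + 1)) :
    Matrix (Fin (2 ^ m)) (Fin (2 ^ m)) R :=
  sus R m (Pi.single i 1) 0

/-- `F_i = S_m(0, e_i)`. -/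
def Fmat (R : Type) [CommRing R] (m : ℕ) (i : Fin (m + 1)) :
    Matrix (Fin (2 ^ m)) (Fin (2 ^ m)) R :=
  sus R m 0 (Pi.single i 1)


theorem Jmat_succ_even (R : Type) [CommRing R] (n : ℕ) (h : Even (n + 1)) :
    Jmat R (n + 1) = Matrix.reindex (pow2Equiv n) (pow2Equiv n)
      (Matrix.fromBlocks (Jmat R n) 0 0 (-(Jmat R n))) := by
  rw [Jmat, if_pos h]

theorem Jmat_succ_odd (R : Type) [CommRing R] (n : ℕ) (h : ¬ Even (n + 1)) :
    Jmat R (n + 1) = Matrix.reindex (pow2Equiv n) (pow2Equiv n)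
      (Matrix.fromBlocks 0 (Jmat R n) (-(Jmat R n)) 0) := by
  rw [Jmat, if_neg h]

theorem reindex_mul_aux {R : Type} [CommRing R] {m k : Type} [Fintype m] [Fintype k]
    (e : m ≃ k) (A B : Matrix m m R) :
    Matrix.reindex e e A * Matrix.reindex e e B = Matrix.reindex e e (A * B) := by
  simp [Matrix.reindex_apply, Matrix.submatrix_mul_equiv]

theorem reindex_neg_aux {R : Type} [CommRing R] {m k : Type}
    (e : m ≃ k) (A : Matrix m m R) :
    -(Matrix.reindex e e A) = Matrix.reindex e e (-A) := rfl

theorem reindex_one_aux {R : Type} [CommRing R] {m k : Type} [DecidableEq m] [DecidableEq k]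
    (e : m ≃ k) :
    (1 : Matrix k k R) = Matrix.reindex e e 1 := by
  simp [Matrix.reindex_apply]

theorem Jmat_mul_transpose (R : Type) [CommRing R] (n : ℕ) :
    Jmat R n * (Jmat R n)ᵀ = 1 := by
  induction n with
  | zero => simp [Jmat]
  | succ n ih =>
    by_cases h : Even (n + 1)
    · rw [Jmat_succ_even R n h, Matrix.transpose_reindex, reindex_mul_aux,
        Matrix.fromBlocks_transpose, Matrix.fromBlocks_multiply,
        reindex_one_aux (pow2Equiv n)]
      simp [ih, Matrix.fromBlocks_one]
    · rw [Jmat_succ_odd R n h, Matrix.transpose_reindex, reindex_mul_aux,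
        Matrix.fromBlocks_transpose, Matrix.fromBlocks_multiply,
        reindex_one_aux (pow2Equiv n)]
      simp [ih, Matrix.fromBlocks_one]

theorem Jmat_transpose (R : Type) [CommRing R] (n : ℕ) :
    (Jmat R n)ᵀ = Jmat R n ∨ (Jmat R n)ᵀ = -Jmat R n := by
  induction n with
  | zero => simp [Jmat]
  | succ n ih =>
    by_cases h : Even (n + 1)
    · rw [Jmat_succ_even R n h, Matrix.transpose_reindex, Matrix.fromBlocks_transpose,
        reindex_neg_aux]
      rcases ih with ih | ih
      · left; simp [ih]
      · right; simp [ih, Matrix.fromBlocks_neg]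
    · rw [Jmat_succ_odd R n h, Matrix.transpose_reindex, Matrix.fromBlocks_transpose,
        reindex_neg_aux]
      rcases ih with ih | ih
      · right; simp [ih, Matrix.fromBlocks_neg]
      · left; simp [ih]

theorem Jmat_sus (R : Type) [CommRing R] (n : ℕ) :
    (Even n → ∀ v w : Fin (n + 1) → R,
      Jmat R n * (sus R n v w)ᵀ * (Jmat R n)ᵀ = sus R n v w ∧
      Jmat R n * sus R n v w * (Jmat R n)ᵀ = (sus R n v w)ᵀ) ∧
    (¬ Even n → ∀ v w : Fin (n + 1) → R,
      Jmat R n * sus R n w v * (Jmat R n)ᵀ = sus R n v w ∧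
      Jmat R n * (sus R n w v)ᵀ * (Jmat R n)ᵀ = (sus R n v w)ᵀ) := by
  induction n with
  | zero => simp [Jmat, sus]
  | succ n ih =>
    have hJ := Jmat_mul_transpose R n
    constructor
    · intro h v w
      have h' : ¬ Even n := by rwa [Nat.even_add_one] at h
      have h1 := fun v w => (ih.2 h' v w).1
      have h2 := fun v w => (ih.2 h' v w).2
      rw [Jmat_succ_even R n h, sus]
      simp only [Matrix.transpose_reindex, reindex_mul_aux,
        Matrix.fromBlocks_transpose, Matrix.fromBlocks_multiply]
      constructor <;> congr 1 <;> simp [hJ, h1, h2]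
    · intro h v w
      have h' : Even n := by rwa [Nat.even_add_one, not_not] at h
      have h1 := fun v w => (ih.1 h' v w).1
      have h2 := fun v w => (ih.1 h' v w).2
      rw [Jmat_succ_odd R n h, sus, sus]
      simp only [Matrix.transpose_reindex, reindex_mul_aux,
        Matrix.fromBlocks_transpose, Matrix.fromBlocks_multiply]
      constructor <;> congr 1 <;> simp [hJ, h1, h2]

/-- for `n ≥ 1` the map `M ↦ M* = J_n · Mᵀ · J_nᵀ` on `M_{2^n}(R)` is an
`R`-linear anti-automorphism of order two, and `φ(v,w)* = -φ(v,w)` for all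
`(v,w) ∈ R^n ⊕ R^n`; i.e. it is the standard involution of the Clifford algebra,
the anti-automorphism extending `(v,w) ↦ (-v,-w)`.  (Stated with `n + 1` for `n`.) -/
theorem invol_is_standard_involution (R : Type) [CommRing R] (n : ℕ) :
    (∀ M N : Matrix (Fin (2 ^ (n + 1))) (Fin (2 ^ (n + 1))) R,
      invol R (n + 1) (M * N) = invol R (n + 1) N * invol R (n + 1) M) ∧
    (∀ M : Matrix (Fin (2 ^ (n + 1))) (Fin (2 ^ (n + 1))) R,
      invol R (n + 1) (invol R (n + 1) M) = M) ∧
    (∀ (c : R) (M : Matrix (Fin (2 ^ (n + 1))) (Fin (2 ^ (n + 1))) R),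
      invol R (n + 1) (c • M) = c • invol R (n + 1) M) ∧
    (∀ M N : Matrix (Fin (2 ^ (n + 1))) (Fin (2 ^ (n + 1))) R,
      invol R (n + 1) (M + N) = invol R (n + 1) M + invol R (n + 1) N) ∧
    (∀ v w : Fin (n + 1) → R, invol R (n + 1) (phiMat R n v w) = -(phiMat R n v w)) := by
  have hJ := Jmat_mul_transpose R (n + 1)
  have hJ2 : (Jmat R (n + 1))ᵀ * Jmat R (n + 1) = 1 := mul_eq_one_comm.mp hJ
  refine ⟨?_, ?_, ?_, ?_, ?_⟩
  · intro M N
    unfold invol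
    calc Jmat R (n + 1) * (M * N)ᵀ * (Jmat R (n + 1))ᵀ
        = Jmat R (n + 1) * Nᵀ * 1 * Mᵀ * (Jmat R (n + 1))ᵀ := by
          simp [Matrix.transpose_mul, Matrix.mul_assoc]
      _ = _ := by rw [← hJ2]; simp only [Matrix.mul_assoc]
  · intro M
    unfold invol
    have key : Jmat R (n + 1) * (Jmat R (n + 1) * Mᵀ * (Jmat R (n + 1))ᵀ)ᵀ * (Jmat R (n + 1))ᵀ
        = (Jmat R (n + 1) * Jmat R (n + 1)) * M *
          ((Jmat R (n + 1))ᵀ * (Jmat R (n + 1))ᵀ) := by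
      simp [Matrix.transpose_mul, Matrix.mul_assoc]
    rw [key]
    rcases Jmat_transpose R (n + 1) with h | h
    · rw [h] at hJ ⊢
      rw [hJ]; simp
    · rw [h] at hJ ⊢
      have h3 : Jmat R (n + 1) * Jmat R (n + 1) = -1 := by
        rw [← hJ]; simp
      simp [h3]
  · intro c M
    simp [invol]
  · intro M N
    simp [invol, Matrix.mul_add, Matrix.add_mul]
  · intro v w
    have ih := Jmat_sus R n
    unfold invol phiMat susBar
    by_cases h : Even (n + 1)
    · have h' : ¬ Even n := by rwa [Nat.even_add_one] at h
      have h1 := fun v w => (ih.2 h' v w).1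
      have h2 := fun v w => (ih.2 h' v w).2
      rw [Jmat_succ_even R n h, reindex_neg_aux]
      simp only [Matrix.transpose_reindex, reindex_mul_aux,
        Matrix.fromBlocks_transpose, Matrix.fromBlocks_multiply]
      congr 1
      simp [h1, h2, Matrix.fromBlocks_neg]
    · have h' : Even n := by rwa [Nat.even_add_one, not_not] at h
      have h1 := fun v w => (ih.1 h' v w).1
      have h2 := fun v w => (ih.1 h' v w).2
      rw [Jmat_succ_odd R n h, reindex_neg_aux]
      simp only [Matrix.transpose_reindex, reindex_mul_aux,
        Matrix.fromBlocks_transpose, Matrix.fromBlocks_multiply]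
      congr 1
      simp [h1, h2, Matrix.fromBlocks_neg]
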